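/- arXiv:1702.02516 — 2 statements merged into one kernel-verified Lean document; each statement's English description precedes it below -/
import Mathlib

section
/- The map G_{f₀} is topologically transitive on the metric space (𝒳, d): for every pair of nonempty open sets U, V ⊆ 𝒳 there exists k > 0 such that G_{f₀}^k(U) ∩ V ≠ ∅. -/
/-!
Given `(S, E) ∈ U` and `(T, F) ∈ V`, openness of `U` is only needed in the following form: if `S'`
agrees with `S` on its first `n` terms, then `(S', E)` is at distance at most `10⁻ⁿ` from `(S, E)`
(`dS_le_of_agree`), hence lies in `U` for `n` large. So the first `n` terms are constrained and all
the later ones are free. After they have been used, the state is some `E'`; listing next the cells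
at which `E'` and `F` differ negates exactly these, so the state becomes `F`
(`exists_strategy_reach`). Ending the strategy with `T` makes the orbit pass exactly through
`(T, F)` (`exists_prefix_reach`).
-/

open scoped BigOperators

/-- Hamming-type distance between two Boolean states: number of differing cells. -/
noncomputable def dE {N : ℕ} (E F : Fin N → Bool) : ℝ :=
  ((Finset.univ.filter fun k => E k ≠ F k).card : ℝ)

/-- Distance between two strategies. -/
noncomputable def dS {N : ℕ} (S T : ℕ → Fin N) : ℝ :=
  (9 / (N : ℝ)) * ∑' k : ℕ, |((S k : ℕ) : ℝ) - ((T k : ℕ) : ℝ)| / 10 ^ (k + 1)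

/-- Distance on the phase space 𝒳 = strategies × Boolean states. -/
noncomputable def dX {N : ℕ} (x y : (ℕ → Fin N) × (Fin N → Bool)) : ℝ :=
  dE x.2 y.2 + dS x.1 y.1

/-- `F_f(k, E)`: iterate the `k`-th cell of `E` using `f`, leaving other cells unchanged. -/
def Ff {N : ℕ} (f : (Fin N → Bool) → Fin N → Bool) (k : Fin N)
    (E : Fin N → Bool) : Fin N → Bool :=
  fun j => if j = k then f E j else E j

/-- `G_f(S, E) = (σ(S), F_f(i(S), E))`, where `σ` is the shift and `i` the initial map. -/
def Gf {N : ℕ} (f : (Fin N → Bool) → Fin N → Bool)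
    (x : (ℕ → Fin N) × (Fin N → Bool)) : (ℕ → Fin N) × (Fin N → Bool) :=
  (fun n => x.1 (n + 1), Ff f (x.1 0) x.2)

/-- The vectorial negation `f₀(x₁, …, x_N) = (¬x₁, …, ¬x_N)`. -/
def f0 {N : ℕ} : (Fin N → Bool) → Fin N → Bool := fun E j => !(E j)

/-- Open sets of the metric topology induced by `dX` on the phase space 𝒳. -/
def isOpenX {N : ℕ} (U : Set ((ℕ → Fin N) × (Fin N → Bool))) : Prop :=
  ∀ x ∈ U, ∃ ε > 0, ∀ y, dX x y < ε → y ∈ U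

/-- The term `|S k - T k|` is at most `N`, and vanishes for `k < n`, so `dS` is bounded by a
geometric tail. -/
lemma dS_le_of_agree {N : ℕ} (hN : 1 ≤ N) (n : ℕ) (S T : ℕ → Fin N)
    (h : ∀ k < n, S k = T k) : dS S T ≤ (1 / 10 : ℝ) ^ n := by
  have hN0 : (0 : ℝ) < N := by exact_mod_cast hN
  set f : ℕ → ℝ := fun k => |((S k : ℕ) : ℝ) - ((T k : ℕ) : ℝ)| / 10 ^ (k + 1) with hf
  have hb : ∀ k, f k ≤ N / 10 * (1 / 10 : ℝ) ^ k := by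
    intro k
    have h1 : |((S k : ℕ) : ℝ) - ((T k : ℕ) : ℝ)| ≤ N := by
      have hS : ((S k : ℕ) : ℝ) ≤ N := by exact_mod_cast (S k).2.le
      have hT : ((T k : ℕ) : ℝ) ≤ N := by exact_mod_cast (T k).2.le
      have hS0 : (0 : ℝ) ≤ ((S k : ℕ) : ℝ) := Nat.cast_nonneg _
      have hT0 : (0 : ℝ) ≤ ((T k : ℕ) : ℝ) := Nat.cast_nonneg _
      rw [abs_le]
      constructor <;> linarith
    calc f k ≤ N / 10 ^ (k + 1) := by simp only [hf]; gcongr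
      _ = N / 10 * (1 / 10 : ℝ) ^ k := by
        rw [pow_succ, one_div, inv_pow]; field_simp
  have hg : HasSum (fun k : ℕ => (1 / 10 : ℝ) ^ k) (1 - 1 / 10)⁻¹ :=
    hasSum_geometric_of_lt_one (by norm_num) (by norm_num)
  have hs : Summable f := Summable.of_nonneg_of_le (fun k => by positivity) hb
    (hg.summable.mul_left _)
  have h0 : ∑ k ∈ Finset.range n, f k = 0 := by
    refine Finset.sum_eq_zero fun k hk => ?_
    simp [hf, h k (Finset.mem_range.1 hk)]
  have htail : ∑' k, f (k + n) ≤ N / 10 * (1 / 10 : ℝ) ^ n * (1 - 1 / 10)⁻¹ := by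
    refine ((summable_nat_add_iff n).2 hs).tsum_le_of_sum_le ?_
    intro s
    refine le_trans (Finset.sum_le_sum fun k _ => ?_)
      (sum_le_hasSum s (fun k _ => by positivity) (hg.mul_left (N / 10 * (1 / 10 : ℝ) ^ n)))
    calc f (k + n) ≤ _ := hb _
      _ = _ := by rw [pow_add]; ring
  have hsum : ∑' k, f k = ∑' k, f (k + n) := by
    rw [← hs.sum_add_tsum_nat_add n, h0, zero_add]
  calc dS S T = 9 / N * ∑' k, f k := rfl
    _ ≤ 9 / N * (N / 10 * (1 / 10 : ℝ) ^ n * (1 - 1 / 10)⁻¹) := by rw [hsum]; gcongr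
    _ = (1 / 10 : ℝ) ^ n := by field_simp; norm_num

/-- The strategy `a, S 0, S 1, …`. -/
def consStrategy {N : ℕ} (a : Fin N) (S : ℕ → Fin N) : ℕ → Fin N
  | 0 => a
  | k + 1 => S k

lemma Gf_consStrategy {N : ℕ} (f : (Fin N → Bool) → Fin N → Bool) (a : Fin N)
    (S : ℕ → Fin N) (E : Fin N → Bool) : Gf f (consStrategy a S, E) = (S, Ff f a E) := rfl

/-- Negating the cells where `E` and `F` differ, one at a time, leads from `E` to `F`; the
induction is on the number of these cells. -/
lemma exists_strategy_reach {N : ℕ} (T : ℕ → Fin N) (F E : Fin N → Bool) :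
    ∃ (m : ℕ) (S : ℕ → Fin N), (Gf f0)^[m] (S, E) = (T, F) := by
  induction hc : (Finset.univ.filter fun k => E k ≠ F k).card generalizing E with
  | zero =>
    have hEF : E = F := by
      funext k
      by_contra hk
      have hmem : k ∈ Finset.univ.filter fun k => E k ≠ F k := by simpa using hk
      rw [Finset.card_eq_zero.1 hc] at hmem
      simp at hmem
    exact ⟨0, T, by simp [hEF]⟩
  | succ c ih =>
    obtain ⟨a, ha⟩ := Finset.card_pos.1 (by omega : 0 <
      (Finset.univ.filter fun k => E k ≠ F k).card)
    have haEF : E a ≠ F a := by simpa using ha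
    have herase : (Finset.univ.filter fun k => Ff f0 a E k ≠ F k) =
        (Finset.univ.filter fun k => E k ≠ F k).erase a := by
      ext k
      by_cases hk : k = a
      · subst hk
        cases hE : E k <;> cases hF : F k <;> simp_all [Ff, f0]
      · rw [Finset.mem_erase, Finset.mem_filter, Finset.mem_filter]
        simp [Ff, hk]
    obtain ⟨m, S, hS⟩ := ih (Ff f0 a E) (by
      rw [herase, Finset.card_erase_of_mem ha, hc]; rfl)
    exact ⟨m + 1, consStrategy a S, by
      rw [Function.iterate_succ_apply, Gf_consStrategy, hS]⟩

/-- Prescribing the first `n` terms of the strategy does not prevent reaching `(T, F)`. -/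
lemma exists_prefix_reach {N : ℕ} (T : ℕ → Fin N) (F : Fin N → Bool) (n : ℕ)
    (S : ℕ → Fin N) (E : Fin N → Bool) :
    ∃ (m : ℕ) (S' : ℕ → Fin N), n ≤ m ∧ (∀ k < n, S k = S' k) ∧
      (Gf f0)^[m] (S', E) = (T, F) := by
  induction n generalizing S E with
  | zero =>
    obtain ⟨m, S', h⟩ := exists_strategy_reach T F E
    exact ⟨m, S', Nat.zero_le _, by simp, h⟩
  | succ n ih =>
    obtain ⟨m, S', hm, hagree, h⟩ := ih (fun k => S (k + 1)) (Ff f0 (S 0) E)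
    refine ⟨m + 1, consStrategy (S 0) S', by omega, ?_, ?_⟩
    · rintro (_ | k) hk
      · rfl
      · exact hagree k (by omega)
    · rw [Function.iterate_succ_apply, Gf_consStrategy, h]

/-- `G_{f₀}` is topologically transitive on `(𝒳, d)`. -/
theorem Gf0_transitive (N : ℕ) (hN : 1 ≤ N) :
    ∀ U V : Set ((ℕ → Fin N) × (Fin N → Bool)),
      isOpenX U → isOpenX V → U.Nonempty → V.Nonempty →
        ∃ k : ℕ, 0 < k ∧ ((Gf f0)^[k] '' U ∩ V).Nonempty := by
  rintro U V hU - ⟨⟨S, E⟩, hx⟩ ⟨⟨T, F⟩, hy⟩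
  obtain ⟨ε, hε, hball⟩ := hU _ hx
  obtain ⟨n, hn⟩ := exists_pow_lt_of_lt_one hε (by norm_num : (1 / 10 : ℝ) < 1)
  -- A prefix of length `n + 1` rather than `n` makes the number of iterations positive.
  obtain ⟨m, S', hm, hagree, h⟩ := exists_prefix_reach T F (n + 1) S E
  refine ⟨m, by omega, (T, F), ⟨(S', E), hball _ ?_, h⟩, hy⟩
  have hd : dS S S' ≤ (1 / 10 : ℝ) ^ n :=
    dS_le_of_agree hN n S S' fun k hk => hagree k (by omega)
  have hE : dE E E = 0 := by simp [dE]
  calc dX (S, E) (S', E) = dE E E + dS S S' := rfl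
    _ < ε := by rw [hE, zero_add]; exact hd.trans_lt hn
end

section
/- The map G_{f₀} is expansive on the metric space (𝒳, d): there exists ε > 0 such that for all x ≠ y in 𝒳 there exists n ∈ ℕ with d(G_{f₀}^n(x), G_{f₀}^n(y)) ≥ ε. -/
/-!
The constant `ε = 1` works. The Boolean part of the distance is a cell count, so `d < 1` forces
the states to be equal. If two orbits stay within distance less than `1` at all times, their
states agree at all times. Under the negation the `n`-th step flips exactly the cell `S n`, so
equal states at times `n` and `n + 1` force `S n = T n` (`eq_of_Ff_f0_eq`). Hence the strategies
agree as well, and the two initial points coincide.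
-/

open scoped BigOperators

theorem dS_nonneg {N : ℕ} (S T : ℕ → Fin N) : 0 ≤ dS S T :=
  mul_nonneg (by positivity) (tsum_nonneg fun _ => by positivity)

theorem snd_eq_of_dX_lt_one {N : ℕ} {x y : (ℕ → Fin N) × (Fin N → Bool)} (h : dX x y < 1) :
    x.2 = y.2 := by
  have h1 : dE x.2 y.2 < 1 := by
    have := dS_nonneg x.1 y.1
    unfold dX at h
    linarith
  unfold dE at h1
  have h2 : (Finset.univ.filter fun k => x.2 k ≠ y.2 k).card = 0 := by
    have : (Finset.univ.filter fun k => x.2 k ≠ y.2 k).card < 1 := by exact_mod_cast h1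
    omega
  funext k
  by_contra hk
  have hmem : k ∈ Finset.univ.filter fun k => x.2 k ≠ y.2 k := by simp [hk]
  rw [Finset.card_eq_zero] at h2
  rw [h2] at hmem
  simp at hmem

theorem Gf_iterate_fst {N : ℕ} (f : (Fin N → Bool) → Fin N → Bool)
    (x : (ℕ → Fin N) × (Fin N → Bool)) (n k : ℕ) : ((Gf f)^[n] x).1 k = x.1 (k + n) := by
  induction n generalizing k with
  | zero => rfl
  | succ n ih =>
    rw [Function.iterate_succ_apply']
    change ((Gf f)^[n] x).1 (k + 1) = _
    rw [ih, show k + 1 + n = k + (n + 1) by omega]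

/-- The cell updated by the negation can be read off from the state before and after the step. -/
theorem eq_of_Ff_f0_eq {N : ℕ} {i j : Fin N} {E : Fin N → Bool} (h : Ff f0 i E = Ff f0 j E) :
    i = j := by
  by_contra hij
  have := congrFun h i
  simp [Ff, f0, hij] at this

/-- `G_{f₀}` is expansive on `(𝒳, d)`. -/
theorem Gf0_expansive (N : ℕ) (hN : 1 ≤ N) :
    ∃ ε > (0 : ℝ), ∀ x y : (ℕ → Fin N) × (Fin N → Bool), x ≠ y →
      ∃ n : ℕ, ε ≤ dX ((Gf f0)^[n] x) ((Gf f0)^[n] y) := by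
  refine ⟨1, one_pos, fun x y hxy => ?_⟩
  by_contra! hlt
  have hE : ∀ n, ((Gf f0)^[n] x).2 = ((Gf f0)^[n] y).2 := fun n => snd_eq_of_dX_lt_one (hlt n)
  refine hxy (Prod.ext (funext fun n => ?_) (hE 0))
  have h := hE (n + 1)
  rw [Function.iterate_succ_apply', Function.iterate_succ_apply'] at h
  change Ff f0 (((Gf f0)^[n] x).1 0) ((Gf f0)^[n] x).2 =
    Ff f0 (((Gf f0)^[n] y).1 0) ((Gf f0)^[n] y).2 at h
  rw [hE n] at h
  simpa [Gf_iterate_fst] using eq_of_Ff_f0_eq h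
end
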